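/- Let (F, θ) be a monad morphism from T₁ to T₂ with F fully faithful and θ a natural isomorphism, and let F̂ : Alg(T₁) → Alg(T₂) be the induced functor (F̂(A, σ) = (FA, Fσ ∘ θ_A), F̂(h) = Fh), which satisfies U₂ ∘ F̂ = F ∘ U₁. Then this commuting square is a pullback of categories: for every category D and functors G₁ : D → C₁, G₂ : D → Alg(T₂) with F ∘ G₁ = U₂ ∘ G₂, there exists a unique functor G : D → Alg(T₁) such that U₁ ∘ G = G₁ and F̂ ∘ G = G₂. -/

import Mathlib

open CategoryTheory

/-!
When `F` is fully faithful and the components of `θ` are epimorphisms, `F̂` is fully faithful.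
Morphisms in `Alg(T₁)` are therefore determined by their images in `Alg(T₂)`, and only objects
have to be lifted; that the lifted functor lies over the given one into `C₁` follows from the
faithfulness of `F`. A `T₂`-algebra structure `b` on `F X` comes from the unique `σ : T₁ X ⟶ X`
with `F σ = θ_X⁻¹ ≫ b`, whose algebra axioms are reflected by `F`.
-/

section StrictPullback

variable {A A' B B' D : Type*} [Category A] [Category A'] [Category B] [Category B'] [Category D]

theorem functor_eq_of_comp_faithful_eq {G H : D ⥤ B} (F : B ⥤ B') [F.Faithful]
    (hobj : ∀ d, G.obj d = H.obj d) (hcomp : G ⋙ F = H ⋙ F) : G = H := by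
  refine CategoryTheory.Functor.ext hobj fun d e f => F.map_injective ?_
  simpa [eqToHom_map] using Functor.congr_hom hcomp f

theorem exists_functor_lift_of_fullyFaithful (Φ : A ⥤ A') [Φ.Full] [Φ.Faithful] (G₂ : D ⥤ A')
    (S : D → A) (hS : ∀ d, Φ.obj (S d) = G₂.obj d) :
    ∃ G : D ⥤ A, (∀ d, G.obj d = S d) ∧ G ⋙ Φ = G₂ := by
  let lift {d e : D} (f : d ⟶ e) : S d ⟶ S e :=
    Φ.preimage (eqToHom (hS d) ≫ G₂.map f ≫ eqToHom (hS e).symm)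
  have map_lift {d e : D} (f : d ⟶ e) : Φ.map (lift f) ≍ G₂.map f :=
    (conj_eqToHom_iff_heq _ _ (hS d) (hS e)).1 (Φ.map_preimage _)
  exact ⟨Functor.Faithful.div G₂ Φ S hS lift (map_lift _), fun _ => rfl,
    Functor.hext hS fun _ _ => map_lift⟩

theorem existsUnique_functor_lift_of_existsUnique_obj_lift
    {Φ : A ⥤ A'} {U : A ⥤ B} {U' : A' ⥤ B'} {F : B ⥤ B'} [Φ.Full] [Φ.Faithful] [F.Faithful]
    (hsq : Φ ⋙ U' = U ⋙ F)
    (hlift : ∀ X Y, F.obj X = U'.obj Y → ∃! S, U.obj S = X ∧ Φ.obj S = Y)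
    (G₁ : D ⥤ B) (G₂ : D ⥤ A') (hG : G₁ ⋙ F = G₂ ⋙ U') :
    ∃! G : D ⥤ A, G ⋙ U = G₁ ∧ G ⋙ Φ = G₂ := by
  have hobj (d : D) : F.obj (G₁.obj d) = U'.obj (G₂.obj d) := Functor.congr_obj hG d
  choose S hS _ using fun d => hlift _ _ (hobj d)
  obtain ⟨G, hGS, hGΦ⟩ := exists_functor_lift_of_fullyFaithful Φ G₂ S fun d => (hS d).2
  have hGU : G ⋙ U = G₁ := by
    refine functor_eq_of_comp_faithful_eq F (fun d => ?_) ?_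
    · rw [Functor.comp_obj, hGS, (hS d).1]
    · rw [Functor.assoc, ← hsq, ← Functor.assoc, hGΦ, hG]
  refine ⟨G, ⟨hGU, hGΦ⟩, fun H ⟨hHU, hHΦ⟩ => ?_⟩
  refine functor_eq_of_comp_faithful_eq Φ (fun d => ?_) (hHΦ.trans hGΦ.symm)
  exact (hlift _ _ (hobj d)).unique
    ⟨Functor.congr_obj hHU d, Functor.congr_obj hHΦ d⟩
    ⟨Functor.congr_obj hGU d, Functor.congr_obj hGΦ d⟩

end StrictPullback

section MonadAlgebra

variable {C : Type*} [Category C] {T : Monad C}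

theorem monadAlgebra_eq_of_heq {X Y : T.Algebra}
    (hA : X.A = Y.A) (ha : X.a ≍ Y.a) : X = Y := by
  cases X
  cases Y
  cases hA
  cases ha
  rfl

theorem monadAlgebraHom_heq {X Y X' Y' : T.Algebra}
    {f : X ⟶ Y} {g : X' ⟶ Y'} (hX : X = X') (hY : Y = Y') (hf : f.f ≍ g.f) : f ≍ g := by
  subst hX hY
  exact heq_of_eq (Monad.Algebra.Hom.ext (eq_of_heq hf))

end MonadAlgebra

section MonadMorphism

variable {C₁ C₂ : Type*} [Category C₁] [Category C₂]

/-- A monad morphism from `T₁` to `T₂` over `F`. In contrast to `MonadHom`, the two monads may live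
on different categories; over the identity functor this is a `MonadHom` from `T₂` to `T₁`. -/
structure MonadMorphismOver (T₁ : Monad C₁) (T₂ : Monad C₂) (F : C₁ ⥤ C₂) extends
    NatTrans (F ⋙ T₂.toFunctor) (T₁.toFunctor ⋙ F) where
  app_μ (A : C₁) : T₂.μ.app (F.obj A) ≫ app A =
    T₂.map (app A) ≫ app (T₁.obj A) ≫ F.map (T₁.μ.app A)
  app_η (A : C₁) : T₂.η.app (F.obj A) ≫ app A = F.map (T₁.η.app A)

namespace MonadMorphismOver

variable {T₁ : Monad C₁} {T₂ : Monad C₂} {F : C₁ ⥤ C₂} (θ : MonadMorphismOver T₁ T₂ F)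

theorem map_comp_structure {X Y : C₁} (g : X ⟶ Y) (a : T₁.obj Y ⟶ Y) :
    T₂.map (F.map g) ≫ θ.app Y ≫ F.map a = θ.app X ≫ F.map (T₁.map g ≫ a) := by
  have naturality : T₂.map (F.map g) ≫ θ.app Y = θ.app X ≫ F.map (T₁.map g) := θ.naturality g
  rw [← Category.assoc, naturality, F.map_comp, Category.assoc]

theorem η_comp_structure {X : C₁} (a : T₁.obj X ⟶ X) :
    T₂.η.app (F.obj X) ≫ θ.app X ≫ F.map a = F.map (T₁.η.app X ≫ a) := by
  rw [← Category.assoc, θ.app_η, F.map_comp]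

theorem μ_comp_structure {X : C₁} (a : T₁.obj X ⟶ X) :
    T₂.μ.app (F.obj X) ≫ θ.app X ≫ F.map a =
      T₂.map (θ.app X) ≫ θ.app (T₁.obj X) ≫ F.map (T₁.μ.app X ≫ a) := by
  rw [← Category.assoc, θ.app_μ, F.map_comp, Category.assoc, Category.assoc]

theorem map_structure_comp_structure {X : C₁} (a : T₁.obj X ⟶ X) :
    T₂.map (θ.app X ≫ F.map a) ≫ θ.app X ≫ F.map a =
      T₂.map (θ.app X) ≫ θ.app (T₁.obj X) ≫ F.map (T₁.map a ≫ a) := by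
  rw [T₂.map_comp, Category.assoc, map_comp_structure]

/-- The functor `F̂` on Eilenberg–Moore categories induced by a monad morphism over `F`. -/
def algebraFunctor : T₁.Algebra ⥤ T₂.Algebra where
  obj X :=
    { A := F.obj X.A
      a := θ.app X.A ≫ F.map X.a
      unit := by rw [η_comp_structure, X.unit]; exact F.map_id X.A
      assoc := by rw [μ_comp_structure, X.assoc, map_structure_comp_structure] }
  map f :=
    { f := F.map f.f
      h := by
        rw [map_comp_structure, f.h]
        simp only [F.map_comp, Category.assoc] }

theorem eq_algebraFunctor {Φ : T₁.Algebra ⥤ T₂.Algebra}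
    (hA : ∀ X, (Φ.obj X).A = F.obj X.A) (ha : ∀ X, (Φ.obj X).a ≍ θ.app X.A ≫ F.map X.a)
    (hmap : ∀ (X Y : T₁.Algebra) (f : X ⟶ Y), (Φ.map f).f ≍ F.map f.f) :
    Φ = θ.algebraFunctor :=
  have obj_eq (X : T₁.Algebra) : Φ.obj X = θ.algebraFunctor.obj X :=
    monadAlgebra_eq_of_heq (hA X) (ha X)
  Functor.hext obj_eq fun X Y f => monadAlgebraHom_heq (obj_eq X) (obj_eq Y) (hmap X Y f)

instance faithful_algebraFunctor [F.Faithful] : θ.algebraFunctor.Faithful where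
  map_injective h := Monad.Algebra.Hom.ext (F.map_injective (congrArg Monad.Algebra.Hom.f h))

instance full_algebraFunctor [F.Full] [F.Faithful] [∀ X, Epi (θ.app X)] :
    θ.algebraFunctor.Full where
  map_surjective {X Y} k := by
    obtain ⟨k, k_comm⟩ := k
    obtain ⟨g, rfl⟩ : ∃ g : X.A ⟶ Y.A, F.map g = k := F.map_surjective k
    have g_comm : T₁.map g ≫ Y.a = X.a ≫ g := by
      apply F.map_injective
      rw [← cancel_epi (θ.app X.A), ← map_comp_structure, F.map_comp, ← Category.assoc (θ.app X.A)]
      exact k_comm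
    exact ⟨⟨g, g_comm⟩, rfl⟩

theorem algebra_eq_of_algebraFunctor_obj_eq [F.Faithful] [∀ X, Epi (θ.app X)] {S S' : T₁.Algebra}
    (hA : S.A = S'.A) (h : θ.algebraFunctor.obj S = θ.algebraFunctor.obj S') : S = S' := by
  obtain ⟨X, a, _, _⟩ := S
  obtain ⟨_, a', _, _⟩ := S'
  cases hA
  have structure_eq : θ.app X ≫ F.map a = θ.app X ≫ F.map a' :=
    eq_of_heq (Monad.Algebra.mk.inj h).2
  exact monadAlgebra_eq_of_heq rfl
    (heq_of_eq (F.map_injective ((cancel_epi (θ.app X)).1 structure_eq)))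

theorem exists_algebraFunctor_obj_eq [F.Full] [F.Faithful] [∀ X, IsIso (θ.app X)]
    (X : C₁) (B : T₂.Algebra) (h : F.obj X = B.A) :
    ∃ S : T₁.Algebra, S.A = X ∧ θ.algebraFunctor.obj S = B := by
  obtain ⟨_, b, b_unit, b_assoc⟩ := B
  cases h
  obtain ⟨a, rfl⟩ : ∃ a : T₁.obj X ⟶ X, θ.app X ≫ F.map a = b :=
    ⟨F.preimage (inv (θ.app X) ≫ b), by simp⟩
  have a_unit : T₁.η.app X ≫ a = 𝟙 X := by
    apply F.map_injective
    rw [← η_comp_structure, b_unit]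
    exact (F.map_id X).symm
  have a_assoc : T₁.μ.app X ≫ a = T₁.map a ≫ a := by
    rw [μ_comp_structure, map_structure_comp_structure, cancel_epi, cancel_epi] at b_assoc
    exact F.map_injective b_assoc
  exact ⟨⟨X, a, a_unit, a_assoc⟩, rfl, rfl⟩

theorem existsUnique_algebraFunctor_obj_eq [F.Full] [F.Faithful] [∀ X, IsIso (θ.app X)]
    (X : C₁) (B : T₂.Algebra) (h : F.obj X = B.A) :
    ∃! S : T₁.Algebra, S.A = X ∧ θ.algebraFunctor.obj S = B := by
  obtain ⟨S, hSX, hSB⟩ := θ.exists_algebraFunctor_obj_eq X B h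
  exact ⟨S, ⟨hSX, hSB⟩, fun S' ⟨hS'X, hS'B⟩ =>
    θ.algebra_eq_of_algebraFunctor_obj_eq (hS'X.trans hSX.symm) (hS'B.trans hSB.symm)⟩

end MonadMorphismOver

end MonadMorphism

/-- Let `(F, θ)` be a monad morphism from `T₁` to `T₂` with `F` fully faithful
and `θ` a natural isomorphism, and let `F̂ : Alg(T₁) ⥤ Alg(T₂)` be the induced
functor (`F̂(A, σ) = (FA, Fσ ∘ θ_A)`, `F̂(h) = Fh`), which satisfies
`U₂ ∘ F̂ = F ∘ U₁`.  Then this commuting square is a pullback of categories: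
for every category `D` and functors `G₁ : D ⥤ C₁`, `G₂ : D ⥤ Alg(T₂)` with
`F ∘ G₁ = U₂ ∘ G₂`, there exists a unique functor `G : D ⥤ Alg(T₁)` such that
`U₁ ∘ G = G₁` and `F̂ ∘ G = G₂`. -/
theorem stmt_16 {C₁ C₂ : Type*} [Category C₁] [Category C₂]
    (T₁ : Monad C₁) (T₂ : Monad C₂) (F : C₁ ⥤ C₂)
    (θ : F ⋙ T₂.toFunctor ⟶ T₁.toFunctor ⋙ F)
    (θ_μ : ∀ A : C₁, T₂.μ.app (F.obj A) ≫ θ.app A =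
      T₂.map (θ.app A) ≫ θ.app (T₁.obj A) ≫ F.map (T₁.μ.app A))
    (θ_η : ∀ A : C₁, T₂.η.app (F.obj A) ≫ θ.app A = F.map (T₁.η.app A))
    (hFull : F.Full) (hFaithful : F.Faithful) (hiso : IsIso θ)
    (Fhat : Monad.Algebra T₁ ⥤ Monad.Algebra T₂)
    (hobj : ∀ X : Monad.Algebra T₁,
      (Fhat.obj X).A = F.obj X.A ∧ HEq (Fhat.obj X).a (θ.app X.A ≫ F.map X.a))
    (hmap : ∀ (X Y : Monad.Algebra T₁) (f : X ⟶ Y),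
      HEq (Fhat.map f).f (F.map f.f))
    (hsq : Fhat ⋙ Monad.forget T₂ = Monad.forget T₁ ⋙ F) :
    ∀ (D : Type*) [Category D] (G₁ : D ⥤ C₁) (G₂ : D ⥤ Monad.Algebra T₂),
      G₁ ⋙ F = G₂ ⋙ Monad.forget T₂ →
      ∃! G : D ⥤ Monad.Algebra T₁,
        G ⋙ Monad.forget T₁ = G₁ ∧ G ⋙ Fhat = G₂ := by
  intro D _ G₁ G₂ hG
  let Θ : MonadMorphismOver T₁ T₂ F := { θ with app_μ := θ_μ, app_η := θ_η }
  have hΘ (X : C₁) : IsIso (Θ.app X) := inferInstanceAs (IsIso (θ.app X))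
  obtain rfl : Fhat = Θ.algebraFunctor :=
    Θ.eq_algebraFunctor (fun X => (hobj X).1) (fun X => (hobj X).2) hmap
  exact existsUnique_functor_lift_of_existsUnique_obj_lift hsq
    Θ.existsUnique_algebraFunctor_obj_eq G₁ G₂ hG
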